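/- Let θ : ℕ → {0,1} with θ(0) = 0, let μ₀, μ₁ ≥ 1, 0 < ω₀ < 1 ≤ ω₁, T > 0, κ_F, ρ_F, κ*, ρ* ≥ 0, 0 < α ≤ β, and δ > 0. Let W : ℕ → ℝ and s : ℕ → ℝ be sequences with s(k) ≥ 0 and α·s(k)² ≤ W(k) ≤ β·s(k)² for all k, satisfying the following conditional recursion: for every k with s(k) ≤ δ, one has W(k+1) ≤ ω_{θ(k)}·W(k) if θ(k+1) = θ(k), and W(k+1) ≤ μ_{θ(k)}·ω_{θ(k)}·W(k) if θ(k+1) ≠ θ(k). Suppose S(k) ≤ κ_F + ρ_F·kT and χ(k) ≤ (κ* + ρ*·kT)/T for all k, where χ(k) := #{j < k : θ(j) = 1} and S(k) := #{j < k : θ(j) = 0 and θ(j+1) = 1}. If ω := (μ₀μ₁)^{ρ_F T}·ω₀^{1−ρ*}·ω₁^{ρ*} < 1 and s(0) < √(α/β)·c_W^{−1/2}·δ, where c_W := (μ₀μ₁)^{κ_F}·(ω₁/ω₀)^{κ*/T}, then s(k) < δ for all k ∈ ℕ, W(k) ≤ c_W·ω^k·W(0) for all k, and s(k) → 0 as k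 → ∞. -/

import Mathlib

/-- `χ(k)`: the number of indices `j < k` with `θ j = 1` (packet-loss steps). -/
def lossCount (θ : ℕ → ℕ) (k : ℕ) : ℕ :=
  ((Finset.range k).filter fun j => θ j = 1).card

/-- `S(k)`: the number of indices `j < k` with `θ j = 0` and `θ (j+1) = 1`
(switches from the nominal mode to the packet-loss mode). -/
def switchCount (θ : ℕ → ℕ) (k : ℕ) : ℕ :=
  ((Finset.range k).filter fun j => θ j = 0 ∧ θ (j + 1) = 1).card

theorem lossCount_succ_aux (θ : ℕ → ℕ) (k : ℕ) :
    lossCount θ (k + 1) = lossCount θ k + (if θ k = 1 then 1 else 0) := by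
  unfold lossCount
  rw [Finset.range_add_one, Finset.filter_insert]
  split_ifs <;> simp

theorem switchCount_succ_aux (θ : ℕ → ℕ) (k : ℕ) :
    switchCount θ (k + 1) =
      switchCount θ k + (if θ k = 0 ∧ θ (k + 1) = 1 then 1 else 0) := by
  unfold switchCount
  rw [Finset.range_add_one, Finset.filter_insert]
  split_ifs <;> simp

/-- region-of-attraction bootstrapping: if the Lyapunov recursion
only holds while `s k ≤ δ` and the initial condition is small enough, then the
trajectory never leaves the region and converges. -/
theorem stmt5 (θ : ℕ → ℕ) (hθ : ∀ k, θ k = 0 ∨ θ k = 1) (hθ0 : θ 0 = 0)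
    (μ₀ μ₁ ω₀ ω₁ T κF ρF κs ρs α β δ : ℝ)
    (hμ₀ : 1 ≤ μ₀) (hμ₁ : 1 ≤ μ₁) (hω₀ : 0 < ω₀) (hω₀1 : ω₀ < 1) (hω₁ : 1 ≤ ω₁)
    (hT : 0 < T) (hκF : 0 ≤ κF) (hρF : 0 ≤ ρF) (hκs : 0 ≤ κs) (hρs : 0 ≤ ρs)
    (hα : 0 < α) (hαβ : α ≤ β) (hδ : 0 < δ)
    (W s : ℕ → ℝ) (hs : ∀ k, 0 ≤ s k)
    (hWlow : ∀ k, α * s k ^ 2 ≤ W k) (hWhigh : ∀ k, W k ≤ β * s k ^ 2)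
    (hrec_same : ∀ k, s k ≤ δ → θ (k + 1) = θ k →
      W (k + 1) ≤ (if θ k = 0 then ω₀ else ω₁) * W k)
    (hrec_switch : ∀ k, s k ≤ δ → θ (k + 1) ≠ θ k →
      W (k + 1) ≤ (if θ k = 0 then μ₀ else μ₁) * (if θ k = 0 then ω₀ else ω₁) * W k)
    (hS : ∀ k : ℕ, (switchCount θ k : ℝ) ≤ κF + ρF * (k * T))
    (hχ : ∀ k : ℕ, (lossCount θ k : ℝ) ≤ (κs + ρs * (k * T)) / T)
    (hω : (μ₀ * μ₁) ^ (ρF * T) * ω₀ ^ (1 - ρs) * ω₁ ^ ρs < 1)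
    (hs0 : s 0 < Real.sqrt (α / β) *
      ((μ₀ * μ₁) ^ κF * (ω₁ / ω₀) ^ (κs / T)) ^ (-(1 : ℝ) / 2) * δ) :
    (∀ k : ℕ, s k < δ) ∧
    (∀ k : ℕ, W k ≤ ((μ₀ * μ₁) ^ κF * (ω₁ / ω₀) ^ (κs / T)) *
      ((μ₀ * μ₁) ^ (ρF * T) * ω₀ ^ (1 - ρs) * ω₁ ^ ρs) ^ k * W 0) ∧
    Filter.Tendsto s Filter.atTop (nhds 0) := by
  have hM : 1 ≤ μ₀ * μ₁ := one_le_mul_of_one_le_of_one_le hμ₀ hμ₁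
  have hr : 1 ≤ ω₁ / ω₀ := by rw [le_div_iff₀ hω₀]; linarith
  have hω₁p : 0 < ω₁ := by linarith
  have hβ : 0 < β := by linarith
  have hMp : 0 < μ₀ * μ₁ := by linarith
  have hrp : 0 < ω₁ / ω₀ := by linarith
  have hW : ∀ k, 0 ≤ W k := fun k => le_trans (by positivity) (hWlow k)
  obtain ⟨c, hc⟩ : ∃ c, c = (μ₀ * μ₁) ^ κF * (ω₁ / ω₀) ^ (κs / T) := ⟨_, rfl⟩
  obtain ⟨w, hw⟩ : ∃ w, w = (μ₀ * μ₁) ^ (ρF * T) * ω₀ ^ (1 - ρs) * ω₁ ^ ρs := ⟨_, rfl⟩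
  rw [← hc] at hs0 ⊢
  rw [← hw] at hω ⊢
  have hcp : 0 < c := by rw [hc]; positivity
  have hwp : 0 < w := by rw [hw]; positivity
  have hB : ∀ k : ℕ, (μ₀ * μ₁) ^ switchCount θ k * (ω₁ / ω₀) ^ lossCount θ k * ω₀ ^ k
      ≤ c * w ^ k := by
    intro k
    have h1 : (μ₀ * μ₁) ^ switchCount θ k
        ≤ (μ₀ * μ₁) ^ κF * ((μ₀ * μ₁) ^ (ρF * T)) ^ k := by
      rw [← Real.rpow_natCast, ← Real.rpow_natCast, ← Real.rpow_mul hMp.le,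
        ← Real.rpow_add hMp]
      apply Real.rpow_le_rpow_of_exponent_le hM
      have := hS k
      linarith
    have h2 : (ω₁ / ω₀) ^ lossCount θ k
        ≤ (ω₁ / ω₀) ^ (κs / T) * ((ω₁ / ω₀) ^ ρs) ^ k := by
      rw [← Real.rpow_natCast, ← Real.rpow_natCast, ← Real.rpow_mul hrp.le,
        ← Real.rpow_add hrp]
      apply Real.rpow_le_rpow_of_exponent_le hr
      have := hχ k
      have e : (κs + ρs * (k * T)) / T = κs / T + ρs * k := by field_simp
      linarith
    have h3 : w = (μ₀ * μ₁) ^ (ρF * T) * (ω₁ / ω₀) ^ ρs * ω₀ := by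
      rw [hw, Real.rpow_sub hω₀, Real.rpow_one, Real.div_rpow hω₁p.le hω₀.le]
      ring
    calc _ ≤ ((μ₀ * μ₁) ^ κF * ((μ₀ * μ₁) ^ (ρF * T)) ^ k) *
          ((ω₁ / ω₀) ^ (κs / T) * ((ω₁ / ω₀) ^ ρs) ^ k) * ω₀ ^ k := by gcongr
      _ = c * w ^ k := by rw [h3, hc, mul_pow, mul_pow]; ring
  have hs0' : c * β * s 0 ^ 2 < α * δ ^ 2 := by
    have h := pow_lt_pow_left₀ hs0 (hs 0) two_ne_zero
    have e : (c ^ (-(1 : ℝ) / 2)) ^ 2 = c⁻¹ := by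
      rw [← Real.rpow_natCast, ← Real.rpow_mul hcp.le, ← Real.rpow_neg_one]
      norm_num
    rw [mul_pow, mul_pow, Real.sq_sqrt (by positivity), e] at h
    calc c * β * s 0 ^ 2 < c * β * (α / β * c⁻¹ * δ ^ 2) := by gcongr
      _ = α * δ ^ 2 := by field_simp
  have hsm : ∀ k, W k ≤ c * w ^ k * W 0 → s k < δ := by
    intro k hk
    have h1 : c * w ^ k * W 0 ≤ c * 1 * (β * s 0 ^ 2) := by
      have := pow_le_one₀ (n := k) hwp.le hω.le
      have := hW 0
      have := hWhigh 0
      gcongr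
    have h2 : α * s k ^ 2 < α * δ ^ 2 := by
      have := hWlow k
      linarith
    exact lt_of_pow_lt_pow_left₀ 2 hδ.le (lt_of_mul_lt_mul_left h2 hα.le)
  have hstep : ∀ k, (if θ k = 0 then 1 else μ₁) * W k ≤
      (μ₀ * μ₁) ^ switchCount θ k * (ω₁ / ω₀) ^ lossCount θ k * ω₀ ^ k * W 0 →
      W k ≤ c * w ^ k * W 0 := by
    intro k hk
    have h1 : W k ≤ (if θ k = 0 then 1 else μ₁) * W k := by
      apply le_mul_of_one_le_left (hW k)
      split_ifs <;> linarith
    exact h1.trans (hk.trans (mul_le_mul_of_nonneg_right (hB k) (hW 0)))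
  have hmain : ∀ k, (if θ k = 0 then 1 else μ₁) * W k ≤
      (μ₀ * μ₁) ^ switchCount θ k * (ω₁ / ω₀) ^ lossCount θ k * ω₀ ^ k * W 0 := by
    intro k
    induction k with
    | zero => simp [hθ0, switchCount, lossCount]
    | succ k ih =>
      have hk := (hsm k (hstep k ih)).le
      have a := hrec_same k hk
      have b := hrec_switch k hk
      rw [lossCount_succ_aux, switchCount_succ_aux]
      obtain ⟨X, hX⟩ : ∃ X, X = (μ₀ * μ₁) ^ switchCount θ k *
        (ω₁ / ω₀) ^ lossCount θ k * ω₀ ^ k * W 0 := ⟨_, rfl⟩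
      rw [← hX] at ih
      have hμ₁p : 0 < μ₁ := by linarith
      have hμ₀p : 0 < μ₀ := by linarith
      rcases hθ k with h0 | h0 <;> rcases hθ (k + 1) with h1 | h1 <;>
        simp [h0, h1] at a b ih ⊢
      · calc W (k + 1) ≤ ω₀ * W k := a
          _ ≤ ω₀ * X := by gcongr
          _ = _ := by rw [hX]; ring
      · calc μ₁ * W (k + 1) ≤ μ₁ * (μ₀ * ω₀ * W k) := by gcongr
          _ ≤ μ₁ * (μ₀ * ω₀ * X) := by gcongr
          _ = _ := by rw [hX]; ring
      · calc W (k + 1) ≤ μ₁ * ω₁ * W k := b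
          _ = ω₁ * (μ₁ * W k) := by ring
          _ ≤ ω₁ * X := by gcongr
          _ = (ω₁ / ω₀ * ω₀) * X := by rw [div_mul_cancel₀ _ hω₀.ne']
          _ = _ := by rw [hX]; ring
      · calc μ₁ * W (k + 1) ≤ μ₁ * (ω₁ * W k) := by gcongr
          _ = ω₁ * (μ₁ * W k) := by ring
          _ ≤ ω₁ * X := by gcongr
          _ = (ω₁ / ω₀ * ω₀) * X := by rw [div_mul_cancel₀ _ hω₀.ne']
          _ = _ := by rw [hX]; ring
  have hfin : ∀ k, W k ≤ c * w ^ k * W 0 := fun k => hstep k (hmain k)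
  refine ⟨fun k => hsm k (hfin k), hfin, ?_⟩
  have ht : Filter.Tendsto (fun k : ℕ => Real.sqrt (c * w ^ k * W 0 / α))
      Filter.atTop (nhds 0) := by
    have h := tendsto_pow_atTop_nhds_zero_of_lt_one hwp.le hω
    have h' := (((h.const_mul c).mul_const (W 0)).div_const α).sqrt
    simpa using h'
  refine squeeze_zero hs (fun k => ?_) ht
  apply Real.le_sqrt_of_sq_le
  rw [le_div_iff₀ hα]
  have h1 := hWlow k
  have h2 := hfin k
  linarith
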